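/- For every κ > 0, all Schwartz functions f, h : ℝ → ℂ, and every x ∈ ℝ, one has 16κ⁵ ∬_{ℝ×ℝ} (2κ)^{-1}e^{-κ|x−y|} f(y) (2κ)^{-1}e^{-κ|y−z|} h(z) (2κ)^{-1}e^{-κ|z−x|} dy dz = 3 f(x)h(x) − 3 (Rf″)(x)(Rh″)(x) − 20κ² (Rf′)(x)(Rh′)(x) + 4κ² R[((Rf′)(Rh′))″](x) + 20κ² [((Rf)(Rh))″](x) + 8κ² R[((Rf)(Rh))⁗](x), where R = R₀(2κ) denotes convolution with (4κ)^{-1} e^{-2κ|·|}. (In operator form this is the identity 16κ⁵⟨δₓ, R₀ f R₀ h R₀ δₓ⟩ = 3fh − 3[R₀(2κ)f″][R₀(2κ)h″] + 4κ²(−5 + R₀(2κ)∂²)([R₀(2κ)f′][R₀(2κ)h′]) + 4κ²(5∂² + 2R₀(2κ)∂⁴)([R₀(2κ)f][R₀(2κ)h]).) -/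

import Mathlib

open MeasureTheory

/-- `R₀(2κ)`: convolution with `(4κ)⁻¹ e^{-2κ|·|}`. -/
noncomputable def Rop (κ : ℝ) (g : ℝ → ℂ) (x : ℝ) : ℂ :=
  (((4 * κ)⁻¹ : ℝ) : ℂ) * ∫ y : ℝ, ((Real.exp (-(2 * κ) * |x - y|) : ℝ) : ℂ) * g y

/-!
For each of the six relative orders of `x, y, z`, the exponent `-κ (|x - y| + |y - z| + |z - x|)` is
`-2κ` times the distance between the two extreme points. So the triple-kernel integral `L` is a sum
of six terms built from the one-sided resolvents `(2κ ± ∂)⁻¹`, whose first order equations give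
`L'' = (2κ)² L - G` with an explicit `G`. With `R = R₀(2κ)`, `F = R f` and `H = R h`,
the combination `8κ² (F H + R (F' H') + 8κ² R (F H))` solves the same equation. Since `∂² - (2κ)²`
annihilates no nonzero bounded function, the two agree, and `R ∂² = ∂² R = (2κ)² R - 1` turns this
into the stated form.
-/

open Set Filter Topology

section BoundedContDiff

variable {E : Type*} [NormedAddCommGroup E] [NormedSpace ℝ E]
  {A : Type*} [NormedRing A] [NormedAlgebra ℝ A] {m n : ℕ}

/-- The class `C_b^n` of `n` times continuously differentiable functions on the line all of whose
derivatives of order at most `n` are bounded; `n = 0` gives the bounded continuous functions. -/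
structure BoundedContDiff (n : ℕ) (u : ℝ → E) : Prop where
  contDiff : ContDiff ℝ n u
  bounded : ∃ C, ∀ k ≤ n, ∀ x, ‖iteratedDeriv k u x‖ ≤ C

namespace BoundedContDiff

lemma of_le {u : ℝ → E} (hu : BoundedContDiff n u) (hmn : m ≤ n) : BoundedContDiff m u where
  contDiff := hu.contDiff.of_le (mod_cast hmn)
  bounded := hu.bounded.imp fun _ hC k hk => hC k (hk.trans hmn)

lemma norm_le {u : ℝ → E} (hu : BoundedContDiff n u) : ∃ C, ∀ x, ‖u x‖ ≤ C :=
  hu.bounded.imp fun _ hC x => by simpa using hC 0 n.zero_le x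

lemma add {u v : ℝ → E} (hu : BoundedContDiff n u) (hv : BoundedContDiff n v) :
    BoundedContDiff n fun x => u x + v x := by
  obtain ⟨hu, C, hC⟩ := hu
  obtain ⟨hv, D, hD⟩ := hv
  refine ⟨hu.add hv, C + D, fun k hk x => ?_⟩
  have hk' : (k : WithTop ℕ∞) ≤ n := mod_cast hk
  rw [iteratedDeriv_fun_add (hu.of_le hk').contDiffAt (hv.of_le hk').contDiffAt]
  exact norm_add_le_of_le (hC k hk x) (hD k hk x)

lemma const_smul {𝕜 : Type*} [NormedField 𝕜] [NormedSpace 𝕜 E] [SMulCommClass ℝ 𝕜 E] (c : 𝕜)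
    {u : ℝ → E} (hu : BoundedContDiff n u) : BoundedContDiff n fun x => c • u x := by
  obtain ⟨hu, C, hC⟩ := hu
  refine ⟨hu.const_smul c, ‖c‖ * C, fun k hk x => ?_⟩
  rw [iteratedDeriv_fun_const_smul_field, norm_smul]
  gcongr
  exact hC k hk x

lemma sub {u v : ℝ → E} (hu : BoundedContDiff n u) (hv : BoundedContDiff n v) :
    BoundedContDiff n fun x => u x - v x := by
  simpa [sub_eq_add_neg] using hu.add (hv.const_smul (-1 : ℝ))

lemma comp_neg {u : ℝ → E} (hu : BoundedContDiff n u) : BoundedContDiff n fun x => u (-x) := by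
  obtain ⟨hu, C, hC⟩ := hu
  refine ⟨hu.comp contDiff_neg, C, fun k hk x => ?_⟩
  rw [iteratedDeriv_comp_neg, norm_smul]
  simpa using hC k hk (-x)

lemma mul {u v : ℝ → A} (hu : BoundedContDiff n u) (hv : BoundedContDiff n v) :
    BoundedContDiff n fun x => u x * v x := by
  obtain ⟨hu, C, hC⟩ := hu
  obtain ⟨hv, D, hD⟩ := hv
  have hC₀ : 0 ≤ C := (norm_nonneg _).trans (hC 0 n.zero_le 0)
  simp only [← norm_iteratedFDeriv_eq_norm_iteratedDeriv] at hC hD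
  refine ⟨hu.mul hv, 2 ^ n * (C * D), fun k hk x => ?_⟩
  have hD₀ : 0 ≤ D := (norm_nonneg _).trans (hD 0 n.zero_le 0)
  rw [← norm_iteratedFDeriv_eq_norm_iteratedDeriv]
  calc ‖iteratedFDeriv ℝ k (fun x => u x * v x) x‖
      ≤ ∑ i ∈ Finset.range (k + 1), (k.choose i : ℝ) * ‖iteratedFDeriv ℝ i u x‖ *
          ‖iteratedFDeriv ℝ (k - i) v x‖ :=
        norm_iteratedFDeriv_mul_le hu hv x (mod_cast hk)
    _ ≤ ∑ i ∈ Finset.range (k + 1), (k.choose i : ℝ) * C * D := by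
        gcongr with i hi
        · exact hC i ((Finset.mem_range_succ_iff.1 hi).trans hk) x
        · exact hD (k - i) (k.sub_le i |>.trans hk) x
    _ = 2 ^ k * (C * D) := by
        simp_rw [mul_assoc, ← Finset.sum_mul]
        exact_mod_cast congrArg (· * (C * D)) (congrArg _ (Nat.sum_range_choose k))
    _ ≤ 2 ^ n * (C * D) := by gcongr; norm_num

protected lemma iteratedDeriv {u : ℝ → E} (hu : BoundedContDiff (n + m) u) :
    BoundedContDiff n (iteratedDeriv m u) := by
  obtain ⟨hu, C, hC⟩ := hu
  refine ⟨?_, C, fun k hk x => ?_⟩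
  · rw [iteratedDeriv_eq_iterate]
    exact ContDiff.iterate_deriv' n m (mod_cast hu)
  · have := hC (k + m) (by lia) x
    rwa [iteratedDeriv_eq_iterate, Function.iterate_add_apply, ← iteratedDeriv_eq_iterate,
      ← iteratedDeriv_eq_iterate] at this

protected lemma deriv {u : ℝ → E} (hu : BoundedContDiff (n + 1) u) :
    BoundedContDiff n (deriv u) := by
  simpa using hu.iteratedDeriv

protected lemma hasDerivAt {u : ℝ → E} (hu : BoundedContDiff (n + 1) u) (x : ℝ) :
    HasDerivAt u (deriv u x) x :=
  (hu.contDiff.differentiable (by simp) x).hasDerivAt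

lemma of_hasDerivAt {u u' : ℝ → E} (hu : ∃ C, ∀ x, ‖u x‖ ≤ C)
    (hd : ∀ x, HasDerivAt u (u' x) x) (hu' : BoundedContDiff n u') :
    BoundedContDiff (n + 1) u := by
  obtain ⟨C, hC⟩ := hu
  obtain ⟨hu', D, hD⟩ := hu'
  have hderiv : deriv u = u' := funext fun x => (hd x).deriv
  refine ⟨?_, max C D, fun k hk x => ?_⟩
  · rw [Nat.cast_add, Nat.cast_one, contDiff_succ_iff_deriv, hderiv]
    exact ⟨fun x => (hd x).differentiableAt, by simp, hu'⟩
  · cases k with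
    | zero => simpa using Or.inl (hC x)
    | succ k =>
      rw [iteratedDeriv_succ', hderiv]
      exact (hD k (by lia) x).trans (le_max_right _ _)

lemma of_continuous {u : ℝ → E} (hc : Continuous u) (hb : ∃ C, ∀ x, ‖u x‖ ≤ C) :
    BoundedContDiff 0 u where
  contDiff := contDiff_zero.2 hc
  bounded := by simpa using hb

lemma of_schwartzMap (f : SchwartzMap ℝ E) : BoundedContDiff n f := by
  choose C hC₀ hC using f.decay 0
  refine ⟨f.smooth n, ∑ k ∈ Finset.range (n + 1), C k, fun k hk x => ?_⟩
  have hCk : ‖iteratedDeriv k f x‖ ≤ C k := by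
    simpa [norm_iteratedFDeriv_eq_norm_iteratedDeriv] using hC k x
  exact hCk.trans <| Finset.single_le_sum (f := C) (fun i _ => (hC₀ i).le)
    (Finset.mem_range_succ_iff.2 hk)

end BoundedContDiff

lemma iteratedDeriv_two_eq_of_hasDerivAt {u u' u'' : ℝ → E} (hu : ∀ x, HasDerivAt u (u' x) x)
    (hu' : ∀ x, HasDerivAt u' (u'' x) x) : iteratedDeriv 2 u = u'' := by
  rw [iteratedDeriv_succ, iteratedDeriv_one, funext fun x => (hu x).deriv]
  exact funext fun x => (hu' x).deriv

lemma iteratedDeriv_two_mul {u v : ℝ → A} (hu : ContDiff ℝ 2 u) (hv : ContDiff ℝ 2 v) (x : ℝ) :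
    iteratedDeriv 2 (fun y => u y * v y) x =
      iteratedDeriv 2 u x * v x + 2 * (deriv u x * deriv v x) + u x * iteratedDeriv 2 v x := by
  rw [iteratedDeriv_fun_mul hu.contDiffAt hv.contDiffAt]
  simp [Finset.sum_range_succ, mul_assoc]
  abel

end BoundedContDiff

section Uniqueness

variable {E : Type*} [NormedAddCommGroup E] [NormedSpace ℝ E] {c : ℝ}

lemma exp_smul_eq_exp_smul_of_hasDerivAt {p : ℝ → E} (hd : ∀ x, HasDerivAt p (c • p x) x)
    (x y : ℝ) : Real.exp (-(c * x)) • p x = Real.exp (-(c * y)) • p y := by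
  have hd₀ (x : ℝ) : HasDerivAt (fun x => Real.exp (-(c * x)) • p x) 0 x := by
    have hexp := ((hasDerivAt_id x).const_mul c).fun_neg.exp
    exact (hexp.smul (hd x)).congr_deriv (by simp only [id]; module)
  exact is_const_of_deriv_eq_zero (fun x => (hd₀ x).differentiableAt) (fun x => (hd₀ x).deriv) x y

lemma eq_zero_of_hasDerivAt_smul_self (hc : c ≠ 0) {p : ℝ → E} (hp : ∃ C, ∀ x, ‖p x‖ ≤ C)
    (hd : ∀ x, HasDerivAt p (c • p x) x) : p = 0 := by
  obtain ⟨C, hC⟩ := hp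
  funext x
  have hdecay (s : ℝ) : ‖p x‖ ≤ Real.exp (-s) * C := by
    have hps : p x = Real.exp (-s) • p (x + s / c) := by
      have h := exp_smul_eq_exp_smul_of_hasDerivAt hd x (x + s / c)
      rw [mul_add, mul_div_cancel₀ s hc, neg_add, Real.exp_add, mul_smul] at h
      exact smul_right_injective E (Real.exp_ne_zero _) h
    rw [hps, norm_smul, Real.norm_of_nonneg (Real.exp_nonneg _)]
    gcongr
    exact hC _
  have hlim : Tendsto (fun s : ℝ => Real.exp (-s) * C) atTop (𝓝 0) := by
    simpa using Real.tendsto_exp_neg_atTop_nhds_zero.mul_const C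
  exact norm_le_zero_iff.1 (ge_of_tendsto' hlim hdecay)

-- `∂² - c²` factors as `(∂ - c)(∂ + c)`, so `u' + c u` and then `u` itself are bounded solutions of
-- first order equations.
lemma BoundedContDiff.eq_zero_of_iteratedDeriv_two (hc : c ≠ 0) {u : ℝ → E}
    (hu : BoundedContDiff 2 u) (h : ∀ x, iteratedDeriv 2 u x = c ^ 2 • u x) : u = 0 := by
  have hu₁ : BoundedContDiff 1 u := hu.of_le one_le_two
  have hfactor : (fun x => deriv u x + c • u x) = 0 := by
    refine eq_zero_of_hasDerivAt_smul_self hc (hu.deriv.add (hu₁.const_smul c)).norm_le fun x => ?_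
    have hd := (hu.deriv.hasDerivAt x).fun_add ((hu.hasDerivAt x).const_smul c)
    have hu₂ : deriv (deriv u) x = c ^ 2 • u x := by
      simpa only [iteratedDeriv_succ, iteratedDeriv_zero] using h x
    exact hd.congr_deriv (by rw [hu₂]; module)
  refine eq_zero_of_hasDerivAt_smul_self (neg_ne_zero.2 hc) hu.norm_le fun x => ?_
  rw [neg_smul, ← eq_neg_of_add_eq_zero_left (congrFun hfactor x)]
  exact hu.hasDerivAt x

lemma BoundedContDiff.eq_of_iteratedDeriv_two (hc : c ≠ 0) {u v g : ℝ → E}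
    (hu : BoundedContDiff 2 u) (hv : BoundedContDiff 2 v)
    (hu₂ : ∀ x, iteratedDeriv 2 u x = c ^ 2 • u x - g x)
    (hv₂ : ∀ x, iteratedDeriv 2 v x = c ^ 2 • v x - g x) : u = v := by
  refine sub_eq_zero.1 ((hu.sub hv).eq_zero_of_iteratedDeriv_two hc fun x => ?_)
  have h := iteratedDeriv_sub hu.contDiff.contDiffAt hv.contDiff.contDiffAt (x := x)
  rw [hu₂, hv₂] at h
  exact h.trans (by module)

end Uniqueness

section OneSidedResolvents

variable {E : Type*} [NormedAddCommGroup E] [NormedSpace ℝ E] {a : ℝ} {n : ℕ} {g : ℝ → E}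

/-- The resolvent `(∂ + a)⁻¹`, integrating over the past of `x`. -/
noncomputable def causalResolvent (a : ℝ) (g : ℝ → E) (x : ℝ) : E :=
  ∫ t in Iic x, Real.exp (-(a * (x - t))) • g t

/-- The resolvent `(a - ∂)⁻¹`, integrating over the future of `x`. -/
noncomputable def anticausalResolvent (a : ℝ) (g : ℝ → E) (x : ℝ) : E :=
  ∫ t in Ioi x, Real.exp (-(a * (t - x))) • g t

lemma hasDerivAt_integral_Iic [CompleteSpace E] (hg : Continuous g)
    (hi : ∀ x, IntegrableOn g (Iic x)) (x : ℝ) :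
    HasDerivAt (fun y => ∫ t in Iic y, g t) (g x) x := by
  have hsplit (y : ℝ) : ∫ t in Iic y, g t = (∫ t in Iic x, g t) + ∫ t in x..y, g t :=
    eq_add_of_sub_eq' (intervalIntegral.integral_Iic_sub_Iic (hi x) (hi y))
  rw [funext hsplit]
  exact (hg.integral_hasStrictDerivAt x x).hasDerivAt.const_add _

lemma causalResolvent_eq_exp_smul (a : ℝ) (g : ℝ → E) (x : ℝ) :
    causalResolvent a g x = Real.exp (-(a * x)) • ∫ t in Iic x, Real.exp (a * t) • g t := by
  rw [causalResolvent, ← integral_smul]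
  refine integral_congr_ae (.of_forall fun t => ?_)
  simp only [smul_smul, ← Real.exp_add]
  ring_nf

lemma anticausalResolvent_eq_causalResolvent_comp_neg (a : ℝ) (g : ℝ → E) (x : ℝ) :
    anticausalResolvent a g x = causalResolvent a (fun t => g (-t)) (-x) := by
  have hreflect := integral_comp_neg_Iic (-x) fun t => Real.exp (-(a * (t - x))) • g t
  rw [neg_neg] at hreflect
  rw [anticausalResolvent, causalResolvent, ← hreflect]
  simp only [neg_sub_comm _ x]

lemma integrable_exp_neg_mul_abs_sub (ha : 0 < a) (x : ℝ) :
    Integrable fun y => Real.exp (-(a * |x - y|)) := by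
  have hcentred : Integrable fun y => Real.exp (-(a * |y|)) := by
    refine .of_integral_ne_zero ?_
    have hhalf : ∫ y in Ioi 0, Real.exp (-(a * y)) = a⁻¹ := by
      simpa [neg_mul] using integral_exp_mul_Ioi (neg_neg_iff_pos.2 ha) 0
    rw [integral_comp_abs (f := fun y => Real.exp (-(a * y))), hhalf]
    positivity
  exact hcentred.comp_sub_left x

lemma BoundedContDiff.integrable_exp_abs_smul (ha : 0 < a) (hg : BoundedContDiff n g) (x : ℝ) :
    Integrable fun y => Real.exp (-(a * |x - y|)) • g y := by
  obtain ⟨C, hC⟩ := hg.norm_le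
  exact (integrable_exp_neg_mul_abs_sub ha x).smul_bdd C
    hg.contDiff.continuous.aestronglyMeasurable (.of_forall hC)

lemma integral_exp_abs_smul (ha : 0 < a) (hg : BoundedContDiff n g) (x : ℝ) :
    ∫ y, Real.exp (-(a * |x - y|)) • g y = causalResolvent a g x + anticausalResolvent a g x := by
  have hint := hg.integrable_exp_abs_smul ha x
  rw [← intervalIntegral.integral_Iic_add_Ioi (b := x) hint.integrableOn hint.integrableOn]
  congr 1
  · refine setIntegral_congr_fun measurableSet_Iic fun t (ht : t ≤ x) => ?_
    simp only [abs_of_nonneg (sub_nonneg.2 ht)]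
  · refine setIntegral_congr_fun measurableSet_Ioi fun t (ht : x < t) => ?_
    simp only [abs_of_neg (sub_neg.2 ht), neg_sub]

lemma BoundedContDiff.integrableOn_exp_smul_Iic (ha : 0 < a) (hg : BoundedContDiff n g) (x : ℝ) :
    IntegrableOn (fun t => Real.exp (a * t) • g t) (Iic x) := by
  obtain ⟨C, hC⟩ := hg.norm_le
  exact (integrableOn_exp_mul_Iic ha x).smul_bdd C
    hg.contDiff.continuous.aestronglyMeasurable (.of_forall hC)

lemma norm_causalResolvent_le (ha : 0 < a) {C : ℝ} (hC : ∀ x, ‖g x‖ ≤ C) (x : ℝ) :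
    ‖causalResolvent a g x‖ ≤ C / a := by
  have hle (t : ℝ) : ‖Real.exp (a * t) • g t‖ ≤ Real.exp (a * t) * C := by
    rw [norm_smul, Real.norm_of_nonneg (Real.exp_nonneg _)]
    gcongr
    exact hC t
  rw [causalResolvent_eq_exp_smul, norm_smul, Real.norm_of_nonneg (Real.exp_nonneg _)]
  calc Real.exp (-(a * x)) * ‖∫ t in Iic x, Real.exp (a * t) • g t‖
      ≤ Real.exp (-(a * x)) * ∫ t in Iic x, Real.exp (a * t) * C := by
        gcongr
        exact norm_integral_le_of_norm_le ((integrableOn_exp_mul_Iic ha x).mul_const C)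
          (.of_forall hle)
    _ = C / a := by
        rw [integral_mul_const, integral_exp_mul_Iic ha, Real.exp_neg]
        field_simp

section Derivative

variable [CompleteSpace E]

lemma BoundedContDiff.hasDerivAt_causalResolvent (ha : 0 < a) (hg : BoundedContDiff n g) (x : ℝ) :
    HasDerivAt (causalResolvent a g) (g x - a • causalResolvent a g x) x := by
  have hcont : Continuous fun t => Real.exp (a * t) • g t := by
    have := hg.contDiff.continuous
    fun_prop
  have hint := hasDerivAt_integral_Iic hcont (hg.integrableOn_exp_smul_Iic ha) x
  have hexp := ((hasDerivAt_id x).const_mul a).fun_neg.exp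
  have hd := hexp.smul hint
  rw [show causalResolvent a g = _ from funext (causalResolvent_eq_exp_smul a g)]
  refine hd.congr_deriv ?_
  simp only [id, smul_smul, ← Real.exp_add, neg_add_cancel, Real.exp_zero]
  module

protected lemma BoundedContDiff.causalResolvent (ha : 0 < a) (hg : BoundedContDiff n g) :
    BoundedContDiff (n + 1) (causalResolvent a g) := by
  have hd := hg.hasDerivAt_causalResolvent ha
  have hb : ∃ C, ∀ x, ‖causalResolvent a g x‖ ≤ C := by
    obtain ⟨C, hC⟩ := hg.norm_le
    exact ⟨C / a, norm_causalResolvent_le ha hC⟩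
  induction n with
  | zero =>
    have hcont : Continuous (causalResolvent a g) :=
      continuous_iff_continuousAt.2 fun x => (hd x).continuousAt
    exact of_hasDerivAt hb hd (hg.sub ((of_continuous hcont hb).const_smul a))
  | succ n ih =>
    exact of_hasDerivAt hb hd (hg.sub ((ih (hg.of_le n.le_succ)).const_smul a))

lemma BoundedContDiff.hasDerivAt_anticausalResolvent (ha : 0 < a) (hg : BoundedContDiff n g)
    (x : ℝ) :
    HasDerivAt (anticausalResolvent a g) (a • anticausalResolvent a g x - g x) x := by
  have hd := (hg.comp_neg.hasDerivAt_causalResolvent ha (-x)).scomp x (hasDerivAt_neg x)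
  rw [show anticausalResolvent a g = _ from
    funext (anticausalResolvent_eq_causalResolvent_comp_neg a g)]
  refine hd.congr_deriv ?_
  simp only [neg_neg, neg_smul, one_smul, neg_sub]

protected lemma BoundedContDiff.anticausalResolvent (ha : 0 < a) (hg : BoundedContDiff n g) :
    BoundedContDiff (n + 1) (anticausalResolvent a g) := by
  rw [show anticausalResolvent a g = _ from
    funext (anticausalResolvent_eq_causalResolvent_comp_neg a g)]
  exact (hg.comp_neg.causalResolvent ha).comp_neg

end Derivative

end OneSidedResolvents

section Pairings

variable {a : ℝ} {n : ℕ} {f h : ℝ → ℂ}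

/-- The integral of `e^{-a(x-t)} f(y) h(z)` over `y, z ≤ x`, where `t` is the earlier of `y` and
`z`; its two terms correspond to `z ≤ y` and `y ≤ z`. -/
noncomputable def causalPairing (a : ℝ) (f h : ℝ → ℂ) (x : ℝ) : ℂ :=
  causalResolvent a (fun y => f y * causalResolvent a h y) x +
    causalResolvent a (fun y => h y * causalResolvent a f y) x

/-- The integral of `e^{-a(t-x)} f(y) h(z)` over `x < y, z`, where `t` is the later of `y` and `z`;
its two terms correspond to `y < z` and `z < y`. -/
noncomputable def anticausalPairing (a : ℝ) (f h : ℝ → ℂ) (x : ℝ) : ℂ :=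
  anticausalResolvent a (fun y => f y * anticausalResolvent a h y) x +
    anticausalResolvent a (fun y => h y * anticausalResolvent a f y) x

lemma BoundedContDiff.mul_causalResolvent (ha : 0 < a) (hf : BoundedContDiff n f)
    (hh : BoundedContDiff n h) : BoundedContDiff n fun y => f y * causalResolvent a h y :=
  hf.mul ((hh.causalResolvent ha).of_le n.le_succ)

lemma BoundedContDiff.mul_anticausalResolvent (ha : 0 < a) (hf : BoundedContDiff n f)
    (hh : BoundedContDiff n h) : BoundedContDiff n fun y => f y * anticausalResolvent a h y :=
  hf.mul ((hh.anticausalResolvent ha).of_le n.le_succ)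

lemma hasDerivAt_causalPairing (ha : 0 < a) (hf : BoundedContDiff n f) (hh : BoundedContDiff n h)
    (x : ℝ) :
    HasDerivAt (causalPairing a f h)
      (f x * causalResolvent a h x + h x * causalResolvent a f x - a • causalPairing a f h x) x :=
  (((hf.mul_causalResolvent ha hh).hasDerivAt_causalResolvent ha x).fun_add
    ((hh.mul_causalResolvent ha hf).hasDerivAt_causalResolvent ha x)).congr_deriv
      (by rw [causalPairing]; module)

lemma hasDerivAt_anticausalPairing (ha : 0 < a) (hf : BoundedContDiff n f)
    (hh : BoundedContDiff n h) (x : ℝ) :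
    HasDerivAt (anticausalPairing a f h)
      (a • anticausalPairing a f h x -
        (f x * anticausalResolvent a h x + h x * anticausalResolvent a f x)) x :=
  (((hf.mul_anticausalResolvent ha hh).hasDerivAt_anticausalResolvent ha x).fun_add
    ((hh.mul_anticausalResolvent ha hf).hasDerivAt_anticausalResolvent ha x)).congr_deriv
      (by rw [anticausalPairing]; module)

protected lemma BoundedContDiff.causalPairing (ha : 0 < a) (hf : BoundedContDiff n f)
    (hh : BoundedContDiff n h) : BoundedContDiff (n + 1) (causalPairing a f h) :=
  ((hf.mul_causalResolvent ha hh).causalResolvent ha).add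
    ((hh.mul_causalResolvent ha hf).causalResolvent ha)

protected lemma BoundedContDiff.anticausalPairing (ha : 0 < a) (hf : BoundedContDiff n f)
    (hh : BoundedContDiff n h) : BoundedContDiff (n + 1) (anticausalPairing a f h) :=
  ((hf.mul_anticausalResolvent ha hh).anticausalResolvent ha).add
    ((hh.mul_anticausalResolvent ha hf).anticausalResolvent ha)

end Pairings

section Resolvent

variable {κ : ℝ} {n : ℕ} {g : ℝ → ℂ}

lemma Rop_eq_causalResolvent_add_anticausalResolvent (hκ : 0 < κ) (hg : BoundedContDiff n g) :
    Rop κ g = fun x =>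
      (4 * κ)⁻¹ • (causalResolvent (2 * κ) g x + anticausalResolvent (2 * κ) g x) := by
  funext x
  rw [← integral_exp_abs_smul (by positivity) hg, Rop, Complex.real_smul]
  simp only [Complex.real_smul, neg_mul]

lemma BoundedContDiff.hasDerivAt_Rop (hκ : 0 < κ) (hg : BoundedContDiff n g) (x : ℝ) :
    HasDerivAt (Rop κ g)
      ((2 : ℝ)⁻¹ • (anticausalResolvent (2 * κ) g x - causalResolvent (2 * κ) g x)) x := by
  have ha : 0 < 2 * κ := by positivity
  have hd := ((hg.hasDerivAt_causalResolvent ha x).fun_add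
    (hg.hasDerivAt_anticausalResolvent ha x)).fun_const_smul (4 * κ)⁻¹
  rw [Rop_eq_causalResolvent_add_anticausalResolvent hκ hg]
  refine hd.congr_deriv ?_
  match_scalars <;> field_simp <;> norm_num

lemma BoundedContDiff.iteratedDeriv_two_Rop (hκ : 0 < κ) (hg : BoundedContDiff n g) :
    iteratedDeriv 2 (Rop κ g) = fun x => (2 * κ) ^ 2 • Rop κ g x - g x := by
  have ha : 0 < 2 * κ := by positivity
  have hd (x : ℝ) := ((hg.hasDerivAt_anticausalResolvent ha x).fun_sub
    (hg.hasDerivAt_causalResolvent ha x)).fun_const_smul (2 : ℝ)⁻¹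
  rw [iteratedDeriv_two_eq_of_hasDerivAt (hg.hasDerivAt_Rop hκ) hd,
    Rop_eq_causalResolvent_add_anticausalResolvent hκ hg]
  funext x
  simp only [Complex.real_smul]
  push_cast
  field_simp
  ring

protected lemma BoundedContDiff.Rop (hκ : 0 < κ) (hg : BoundedContDiff n g) :
    BoundedContDiff (n + 2) (Rop κ g) := by
  have hA := hg.causalResolvent (a := 2 * κ) (by positivity)
  have hB := hg.anticausalResolvent (a := 2 * κ) (by positivity)
  have hR : BoundedContDiff (n + 1) (Rop κ g) := by
    rw [Rop_eq_causalResolvent_add_anticausalResolvent hκ hg]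
    exact (hA.add hB).const_smul _
  exact .of_hasDerivAt hR.norm_le (hg.hasDerivAt_Rop hκ) ((hB.sub hA).const_smul _)

lemma BoundedContDiff.eq_Rop_of_iteratedDeriv_two (hκ : 0 < κ) (hg : BoundedContDiff n g)
    {u : ℝ → ℂ} (hu : BoundedContDiff 2 u)
    (hu₂ : ∀ x, iteratedDeriv 2 u x = (2 * κ) ^ 2 • u x - g x) : u = Rop κ g :=
  hu.eq_of_iteratedDeriv_two (by positivity) ((hg.of_le n.zero_le).Rop hκ) hu₂
    (congrFun (hg.iteratedDeriv_two_Rop hκ))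

lemma Rop_deriv (hκ : 0 < κ) {u : ℝ → ℂ} (hu : BoundedContDiff 1 u) :
    Rop κ (deriv u) = deriv (Rop κ u) := by
  have hR : BoundedContDiff 3 (Rop κ u) := hu.Rop hκ
  refine (hu.deriv.eq_Rop_of_iteratedDeriv_two hκ hR.deriv fun x => ?_).symm
  have hd := (((hR.of_le (m := 1) (by simp)).hasDerivAt x).fun_const_smul ((2 * κ) ^ 2)).fun_sub
    (hu.hasDerivAt x)
  rw [← iteratedDeriv_succ', iteratedDeriv_succ, hu.iteratedDeriv_two_Rop hκ, hd.deriv]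

lemma Rop_iteratedDeriv (hκ : 0 < κ) {u : ℝ → ℂ} (hu : BoundedContDiff n u) :
    Rop κ (iteratedDeriv n u) = iteratedDeriv n (Rop κ u) := by
  induction n with
  | zero => simp only [iteratedDeriv_zero]
  | succ n ih =>
    rw [iteratedDeriv_succ, Rop_deriv hκ (BoundedContDiff.iteratedDeriv (by rwa [add_comm])),
      ih (hu.of_le n.le_succ), iteratedDeriv_succ]

lemma Rop_iteratedDeriv_two (hκ : 0 < κ) {u : ℝ → ℂ} (hu : BoundedContDiff 2 u) :
    Rop κ (iteratedDeriv 2 u) = fun x => (2 * κ) ^ 2 • Rop κ u x - u x := by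
  rw [Rop_iteratedDeriv hκ hu, hu.iteratedDeriv_two_Rop hκ]

lemma Rop_iteratedDeriv_four (hκ : 0 < κ) {u : ℝ → ℂ} (hu : BoundedContDiff 4 u) :
    Rop κ (iteratedDeriv 4 u) =
      fun x => (2 * κ) ^ 2 • ((2 * κ) ^ 2 • Rop κ u x - u x) - iteratedDeriv 2 u x := by
  have hsplit : iteratedDeriv 4 u = iteratedDeriv 2 (iteratedDeriv 2 u) := by
    simp only [iteratedDeriv_eq_iterate, ← Function.iterate_add_apply]
  have hu₂ : BoundedContDiff 2 (iteratedDeriv 2 u) := hu.iteratedDeriv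
  rw [hsplit, Rop_iteratedDeriv_two hκ hu₂, Rop_iteratedDeriv_two hκ (hu.of_le (by norm_num))]

lemma iteratedDeriv_two_Rop_mul_Rop (hκ : 0 < κ) {f h : ℝ → ℂ} (hf : BoundedContDiff n f)
    (hh : BoundedContDiff n h) (x : ℝ) :
    iteratedDeriv 2 (fun y => Rop κ f y * Rop κ h y) x =
      ((2 * κ) ^ 2 • Rop κ f x - f x) * Rop κ h x + 2 * (deriv (Rop κ f) x * deriv (Rop κ h) x) +
        Rop κ f x * ((2 * κ) ^ 2 • Rop κ h x - h x) := by
  have hF : ContDiff ℝ 2 (Rop κ f) := ((hf.of_le n.zero_le).Rop hκ).contDiff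
  have hH : ContDiff ℝ 2 (Rop κ h) := ((hh.of_le n.zero_le).Rop hκ).contDiff
  rw [iteratedDeriv_two_mul hF hH, hf.iteratedDeriv_two_Rop hκ, hh.iteratedDeriv_two_Rop hκ]

end Resolvent

section Fubini

variable {E : Type*} [NormedAddCommGroup E] [NormedSpace ℝ E]

section Regions

variable {α β : Type*} [MeasurableSpace α] [MeasurableSpace β] {μ : Measure α} {ν : Measure β}
  {Φ : α × β → E}

lemma integral_eq_sum_quadrants {s : Set α} {t : Set β} (hs : MeasurableSet s)
    (ht : MeasurableSet t) (hΦ : Integrable Φ (μ.prod ν)) :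
    ∫ p, Φ p ∂μ.prod ν =
      (∫ p in s ×ˢ t, Φ p ∂μ.prod ν) + (∫ p in s ×ˢ tᶜ, Φ p ∂μ.prod ν) +
        ((∫ p in sᶜ ×ˢ t, Φ p ∂μ.prod ν) + ∫ p in sᶜ ×ˢ tᶜ, Φ p ∂μ.prod ν) := by
  rw [← integral_add_compl (measurable_fst hs) hΦ,
    ← integral_inter_add_sdiff (measurable_snd ht) hΦ.integrableOn (s := Prod.fst ⁻¹' s),
    ← integral_inter_add_sdiff (measurable_snd ht) hΦ.integrableOn (s := (Prod.fst ⁻¹' s)ᶜ)]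
  simp only [Set.prod_eq, Set.sdiff_eq, preimage_compl]

variable [SFinite μ] [SFinite ν]

lemma setIntegral_prod_eq_integral_section {S : Set (α × β)} (hS : MeasurableSet S)
    (hΦ : Integrable Φ (μ.prod ν)) :
    ∫ p in S, Φ p ∂μ.prod ν = ∫ y, ∫ z in {z | (y, z) ∈ S}, Φ (y, z) ∂ν ∂μ := by
  rw [← integral_indicator hS, integral_prod _ (hΦ.indicator hS)]
  congr with y
  exact integral_indicator (f := fun z => Φ (y, z)) (measurable_prodMk_left hS)

lemma setIntegral_prod_eq_integral_section_symm {S : Set (α × β)} (hS : MeasurableSet S)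
    (hΦ : Integrable Φ (μ.prod ν)) :
    ∫ p in S, Φ p ∂μ.prod ν = ∫ z, ∫ y in {y | (y, z) ∈ S}, Φ (y, z) ∂μ ∂ν := by
  rw [← integral_indicator hS, integral_prod_symm _ (hΦ.indicator hS)]
  congr with z
  exact integral_indicator (f := fun y => Φ (y, z)) (measurable_prodMk_right hS)

end Regions

section Order

variable {α : Type*} [LinearOrder α] [TopologicalSpace α] [OrderClosedTopology α]
  [SecondCountableTopology α] [MeasurableSpace α] [OpensMeasurableSpace α] {μ ν : Measure α}
  [SFinite μ] [SFinite ν] [NullSingletonClass μ] {Φ : α × α → E}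

lemma integral_prod_eq_integral_Ioi (hΦ : Integrable Φ (μ.prod ν)) :
    ∫ p, Φ p ∂μ.prod ν =
      (∫ y, ∫ z in Ioi y, Φ (y, z) ∂ν ∂μ) + ∫ z, ∫ y in Ioi z, Φ (y, z) ∂μ ∂ν := by
  have hS : MeasurableSet {p : α × α | p.1 < p.2} := measurableSet_lt measurable_fst measurable_snd
  rw [← integral_add_compl hS hΦ, setIntegral_prod_eq_integral_section hS hΦ,
    setIntegral_prod_eq_integral_section_symm hS.compl hΦ]
  simp only [mem_compl_iff, mem_ofPred_eq, not_lt, ← integral_Ici_eq_integral_Ioi]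
  rfl

lemma integral_prod_eq_integral_Iic (hΦ : Integrable Φ (μ.prod ν)) :
    ∫ p, Φ p ∂μ.prod ν =
      (∫ y, ∫ z in Iic y, Φ (y, z) ∂ν ∂μ) + ∫ z, ∫ y in Iic z, Φ (y, z) ∂μ ∂ν := by
  have hS : MeasurableSet {p : α × α | p.2 ≤ p.1} := measurableSet_le measurable_snd measurable_fst
  rw [← integral_add_compl hS hΦ, setIntegral_prod_eq_integral_section hS hΦ,
    setIntegral_prod_eq_integral_section_symm hS.compl hΦ]
  simp only [mem_compl_iff, mem_ofPred_eq, not_le, integral_Iic_eq_integral_Iio]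
  rfl

lemma setIntegral_Ioi_prod_Ioi {x : α} (hΦ : IntegrableOn Φ (Ioi x ×ˢ Ioi x) (μ.prod ν)) :
    ∫ p in Ioi x ×ˢ Ioi x, Φ p ∂μ.prod ν =
      (∫ y in Ioi x, ∫ z in Ioi y, Φ (y, z) ∂ν ∂μ) +
        ∫ z in Ioi x, ∫ y in Ioi z, Φ (y, z) ∂μ ∂ν := by
  have hinter {y : α} (hy : y ∈ Ioi x) : Ioi y ∩ Ioi x = Ioi y :=
    inter_eq_left.2 (Ioi_subset_Ioi (le_of_lt hy))
  rw [IntegrableOn, ← Measure.prod_restrict] at hΦ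
  rw [← Measure.prod_restrict, integral_prod_eq_integral_Ioi hΦ]
  simp only [Measure.restrict_restrict measurableSet_Ioi]
  congr 1 <;> exact setIntegral_congr_fun measurableSet_Ioi fun y hy => by simp only [hinter hy]

lemma setIntegral_Iic_prod_Iic {x : α} (hΦ : IntegrableOn Φ (Iic x ×ˢ Iic x) (μ.prod ν)) :
    ∫ p in Iic x ×ˢ Iic x, Φ p ∂μ.prod ν =
      (∫ y in Iic x, ∫ z in Iic y, Φ (y, z) ∂ν ∂μ) +
        ∫ z in Iic x, ∫ y in Iic z, Φ (y, z) ∂μ ∂ν := by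
  have hinter {y : α} (hy : y ∈ Iic x) : Iic y ∩ Iic x = Iic y :=
    inter_eq_left.2 (Iic_subset_Iic.2 hy)
  rw [IntegrableOn, ← Measure.prod_restrict] at hΦ
  rw [← Measure.prod_restrict, integral_prod_eq_integral_Iic hΦ]
  simp only [Measure.restrict_restrict measurableSet_Iic]
  congr 1 <;> exact setIntegral_congr_fun measurableSet_Iic fun y hy => by simp only [hinter hy]

end Order

end Fubini

section Perimeter

variable {κ : ℝ} {n : ℕ} {f h : ℝ → ℂ}

/-- The product `e^{-κ|x-y|} e^{-κ|y-z|} e^{-κ|z-x|}` of three resolvent kernels, without their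
normalizations; the exponent is `-κ` times the perimeter of the degenerate triangle `x, y, z`. -/
noncomputable def perimeterKernel (κ x y z : ℝ) : ℝ :=
  Real.exp (-(κ * (|x - y| + |y - z| + |z - x|)))

/-- The diagonal kernel `(2κ)³ ⟨δₓ, R₀ f R₀ h R₀ δₓ⟩`. -/
noncomputable def perimeterIntegral (κ : ℝ) (f h : ℝ → ℂ) (x : ℝ) : ℂ :=
  ∫ p : ℝ × ℝ, perimeterKernel κ x p.1 p.2 • (f p.1 * h p.2)

lemma perimeterKernel_smul_mul_comm (κ x y z : ℝ) (u v : ℂ) :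
    perimeterKernel κ x y z • (u * v) = perimeterKernel κ x z y • (v * u) := by
  have hperimeter : |x - y| + |y - z| + |z - x| = |x - z| + |z - y| + |y - x| := by grind
  simp only [perimeterKernel, hperimeter, mul_comm u]

lemma integral_kernels_eq_perimeterIntegral (κ : ℝ) (f h : ℝ → ℂ) (x : ℝ) :
    ∫ p : ℝ × ℝ,
        ((((2 * κ)⁻¹ * Real.exp (-κ * |x - p.1|)) *
          ((2 * κ)⁻¹ * Real.exp (-κ * |p.1 - p.2|)) *
          ((2 * κ)⁻¹ * Real.exp (-κ * |p.2 - x|)) : ℝ) : ℂ) * f p.1 * h p.2 =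
      ((2 * κ)⁻¹ ^ 3 : ℝ) • perimeterIntegral κ f h x := by
  rw [perimeterIntegral, ← integral_smul]
  refine integral_congr_ae (.of_forall fun p => ?_)
  simp only [perimeterKernel, mul_add, neg_add, Real.exp_add, Complex.real_smul, neg_mul]
  push_cast
  ring

lemma perimeterKernel_eq_mul (κ x y z : ℝ) : perimeterKernel κ x y z =
    Real.exp (-(κ * |y - z|)) * (Real.exp (-(κ * |x - y|)) * Real.exp (-(κ * |x - z|))) := by
  simp only [perimeterKernel, ← Real.exp_add, abs_sub_comm x z]
  ring_nf

lemma integrable_perimeterKernel_smul (hκ : 0 < κ) (hf : BoundedContDiff n f)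
    (hh : BoundedContDiff n h) (x : ℝ) :
    Integrable fun p : ℝ × ℝ => perimeterKernel κ x p.1 p.2 • (f p.1 * h p.2) := by
  have hprod := (hf.integrable_exp_abs_smul hκ x).mul_prod (hh.integrable_exp_abs_smul hκ x)
  have hmeas : AEStronglyMeasurable fun p : ℝ × ℝ => Real.exp (-(κ * |p.1 - p.2|)) :=
    Continuous.aestronglyMeasurable (by fun_prop)
  refine (hprod.bdd_smul 1 hmeas (.of_forall fun p => ?_)).congr (.of_forall fun p => ?_)
  · rw [Real.norm_of_nonneg (Real.exp_nonneg _), Real.exp_le_one_iff]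
    have := abs_nonneg (p.1 - p.2)
    nlinarith
  · simp only [Pi.smul_apply', perimeterKernel_eq_mul, mul_smul, smul_mul_smul_comm]

lemma anticausalResolvent_mul_anticausalResolvent (a : ℝ) (f h : ℝ → ℂ) (x : ℝ) :
    anticausalResolvent a (fun y => f y * anticausalResolvent a h y) x =
      ∫ y in Ioi x, ∫ z in Ioi y, Real.exp (-(a * (z - x))) • (f y * h z) := by
  simp only [anticausalResolvent, ← integral_const_mul, ← integral_smul, mul_smul_comm, smul_smul,
    ← Real.exp_add]
  ring_nf

lemma causalResolvent_mul_causalResolvent (a : ℝ) (f h : ℝ → ℂ) (x : ℝ) :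
    causalResolvent a (fun y => f y * causalResolvent a h y) x =
      ∫ y in Iic x, ∫ z in Iic y, Real.exp (-(a * (x - z))) • (f y * h z) := by
  simp only [causalResolvent, ← integral_const_mul, ← integral_smul, mul_smul_comm, smul_smul,
    ← Real.exp_add]
  ring_nf

lemma integral_Ioi_integral_Ioi_perimeterKernel_smul (κ : ℝ) (f h : ℝ → ℂ) (x : ℝ) :
    ∫ y in Ioi x, ∫ z in Ioi y, perimeterKernel κ x y z • (f y * h z) =
      anticausalResolvent (2 * κ) (fun y => f y * anticausalResolvent (2 * κ) h y) x := by
  rw [anticausalResolvent_mul_anticausalResolvent]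
  refine setIntegral_congr_fun measurableSet_Ioi fun y (hy : x < y) =>
    setIntegral_congr_fun measurableSet_Ioi fun z (hz : y < z) => ?_
  have hperimeter : |x - y| + |y - z| + |z - x| = 2 * (z - x) := by grind
  simp only [perimeterKernel, hperimeter]
  ring_nf

lemma integral_Iic_integral_Iic_perimeterKernel_smul (κ : ℝ) (f h : ℝ → ℂ) (x : ℝ) :
    ∫ y in Iic x, ∫ z in Iic y, perimeterKernel κ x y z • (f y * h z) =
      causalResolvent (2 * κ) (fun y => f y * causalResolvent (2 * κ) h y) x := by
  rw [causalResolvent_mul_causalResolvent]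
  refine setIntegral_congr_fun measurableSet_Iic fun y (hy : y ≤ x) =>
    setIntegral_congr_fun measurableSet_Iic fun z (hz : z ≤ y) => ?_
  have hperimeter : |x - y| + |y - z| + |z - x| = 2 * (x - z) := by grind
  simp only [perimeterKernel, hperimeter]
  ring_nf

lemma setIntegral_Iic_prod_Ioi_perimeterKernel_smul (κ : ℝ) (f h : ℝ → ℂ) (x : ℝ) :
    ∫ p in Iic x ×ˢ Ioi x, perimeterKernel κ x p.1 p.2 • (f p.1 * h p.2) =
      causalResolvent (2 * κ) f x * anticausalResolvent (2 * κ) h x := by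
  rw [causalResolvent, anticausalResolvent, Measure.volume_eq_prod, ← setIntegral_prod_mul]
  refine setIntegral_congr_fun (measurableSet_Iic.prod measurableSet_Ioi)
    fun p (hp : p.1 ≤ x ∧ x < p.2) => ?_
  have hperimeter : |x - p.1| + |p.1 - p.2| + |p.2 - x| = 2 * (x - p.1) + 2 * (p.2 - x) := by
    grind
  simp only [perimeterKernel, hperimeter, smul_mul_smul_comm, ← Real.exp_add]
  ring_nf

lemma setIntegral_Ioi_prod_Iic_perimeterKernel_smul (κ : ℝ) (f h : ℝ → ℂ) (x : ℝ) :
    ∫ p in Ioi x ×ˢ Iic x, perimeterKernel κ x p.1 p.2 • (f p.1 * h p.2) =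
      anticausalResolvent (2 * κ) f x * causalResolvent (2 * κ) h x := by
  rw [mul_comm, ← setIntegral_Iic_prod_Ioi_perimeterKernel_smul, Measure.volume_eq_prod,
    ← setIntegral_prod_swap]
  simp only [Prod.fst_swap, Prod.snd_swap, perimeterKernel_smul_mul_comm κ x _ _ (f _) (h _)]

lemma setIntegral_Ioi_prod_Ioi_perimeterKernel_smul (hκ : 0 < κ) (hf : BoundedContDiff n f)
    (hh : BoundedContDiff n h) (x : ℝ) :
    ∫ p in Ioi x ×ˢ Ioi x, perimeterKernel κ x p.1 p.2 • (f p.1 * h p.2) =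
      anticausalPairing (2 * κ) f h x := by
  have hint := integrable_perimeterKernel_smul hκ hf hh x
  rw [Measure.volume_eq_prod, setIntegral_Ioi_prod_Ioi hint.integrableOn, anticausalPairing,
    ← integral_Ioi_integral_Ioi_perimeterKernel_smul,
    ← integral_Ioi_integral_Ioi_perimeterKernel_smul]
  simp only [perimeterKernel_smul_mul_comm κ x _ _ (f _) (h _)]

lemma setIntegral_Iic_prod_Iic_perimeterKernel_smul (hκ : 0 < κ) (hf : BoundedContDiff n f)
    (hh : BoundedContDiff n h) (x : ℝ) :
    ∫ p in Iic x ×ˢ Iic x, perimeterKernel κ x p.1 p.2 • (f p.1 * h p.2) =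
      causalPairing (2 * κ) f h x := by
  have hint := integrable_perimeterKernel_smul hκ hf hh x
  rw [Measure.volume_eq_prod, setIntegral_Iic_prod_Iic hint.integrableOn, causalPairing,
    ← integral_Iic_integral_Iic_perimeterKernel_smul,
    ← integral_Iic_integral_Iic_perimeterKernel_smul]
  simp only [perimeterKernel_smul_mul_comm κ x _ _ (f _) (h _)]

lemma perimeterIntegral_eq_sum_orderings (hκ : 0 < κ) (hf : BoundedContDiff n f)
    (hh : BoundedContDiff n h) (x : ℝ) :
    perimeterIntegral κ f h x =
      causalResolvent (2 * κ) f x * anticausalResolvent (2 * κ) h x +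
      anticausalResolvent (2 * κ) f x * causalResolvent (2 * κ) h x +
      causalPairing (2 * κ) f h x + anticausalPairing (2 * κ) f h x := by
  have hquadrants := integral_eq_sum_quadrants (measurableSet_Iic (a := x))
    (measurableSet_Iic (a := x)) (integrable_perimeterKernel_smul hκ hf hh x)
  rw [compl_Iic, ← Measure.volume_eq_prod, setIntegral_Iic_prod_Iic_perimeterKernel_smul hκ hf hh,
    setIntegral_Iic_prod_Ioi_perimeterKernel_smul, setIntegral_Ioi_prod_Iic_perimeterKernel_smul,
    setIntegral_Ioi_prod_Ioi_perimeterKernel_smul hκ hf hh] at hquadrants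
  rw [perimeterIntegral, hquadrants]
  ring

end Perimeter

section PerimeterODE

variable {κ : ℝ} {n : ℕ} {f h : ℝ → ℂ}

lemma hasDerivAt_perimeterIntegral (hκ : 0 < κ) (hf : BoundedContDiff n f)
    (hh : BoundedContDiff n h) (x : ℝ) :
    HasDerivAt (perimeterIntegral κ f h)
      ((2 * κ) • (anticausalPairing (2 * κ) f h x - causalPairing (2 * κ) f h x)) x := by
  have ha : 0 < 2 * κ := by positivity
  have hd := ((((hf.hasDerivAt_causalResolvent ha x).fun_mul
    (hh.hasDerivAt_anticausalResolvent ha x)).fun_add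
    ((hf.hasDerivAt_anticausalResolvent ha x).fun_mul
      (hh.hasDerivAt_causalResolvent ha x))).fun_add
    (hasDerivAt_causalPairing ha hf hh x)).fun_add (hasDerivAt_anticausalPairing ha hf hh x)
  rw [funext (perimeterIntegral_eq_sum_orderings hκ hf hh)]
  refine hd.congr_deriv ?_
  simp only [Complex.real_smul]
  ring

protected lemma BoundedContDiff.perimeterIntegral (hκ : 0 < κ) (hf : BoundedContDiff n f)
    (hh : BoundedContDiff n h) : BoundedContDiff (n + 2) (perimeterIntegral κ f h) := by
  have ha : 0 < 2 * κ := by positivity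
  have hA := hf.causalPairing ha hh
  have hB := hf.anticausalPairing ha hh
  have hL : BoundedContDiff (n + 1) (perimeterIntegral κ f h) := by
    rw [funext (perimeterIntegral_eq_sum_orderings hκ hf hh)]
    exact ((((hf.causalResolvent ha).mul (hh.anticausalResolvent ha)).add
      ((hf.anticausalResolvent ha).mul (hh.causalResolvent ha))).add hA).add hB
  exact .of_hasDerivAt hL.norm_le (hasDerivAt_perimeterIntegral hκ hf hh)
    ((hB.sub hA).const_smul _)

lemma iteratedDeriv_two_perimeterIntegral (hκ : 0 < κ) (hf : BoundedContDiff n f)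
    (hh : BoundedContDiff n h) (x : ℝ) :
    iteratedDeriv 2 (perimeterIntegral κ f h) x =
      (2 * κ) ^ 2 • perimeterIntegral κ f h x -
        8 * (κ : ℂ) ^ 2 * (4 * (κ : ℂ) ^ 2 * (Rop κ f x * Rop κ h x) -
          deriv (Rop κ f) x * deriv (Rop κ h) x + f x * Rop κ h x + Rop κ f x * h x) := by
  have ha : 0 < 2 * κ := by positivity
  have hκ₀ : (κ : ℂ) ≠ 0 := mod_cast hκ.ne'
  have hd (x : ℝ) := ((hasDerivAt_anticausalPairing ha hf hh x).fun_sub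
    (hasDerivAt_causalPairing ha hf hh x)).fun_const_smul (2 * κ)
  rw [iteratedDeriv_two_eq_of_hasDerivAt (hasDerivAt_perimeterIntegral hκ hf hh) hd,
    perimeterIntegral_eq_sum_orderings hκ hf hh, (hf.hasDerivAt_Rop hκ x).deriv,
    (hh.hasDerivAt_Rop hκ x).deriv, Rop_eq_causalResolvent_add_anticausalResolvent hκ hf,
    Rop_eq_causalResolvent_add_anticausalResolvent hκ hh]
  simp only [Complex.real_smul]
  push_cast
  field_simp
  ring

lemma perimeterIntegral_eq_Rop (hκ : 0 < κ) (hf : BoundedContDiff n f)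
    (hh : BoundedContDiff n h) :
    perimeterIntegral κ f h = fun x => 8 * (κ : ℂ) ^ 2 * (Rop κ f x * Rop κ h x +
      Rop κ (fun y => deriv (Rop κ f) y * deriv (Rop κ h) y) x +
      8 * (κ : ℂ) ^ 2 * Rop κ (fun y => Rop κ f y * Rop κ h y) x) := by
  replace hf := hf.of_le n.zero_le
  replace hh := hh.of_le n.zero_le
  have hQ : BoundedContDiff 2 fun y => Rop κ f y * Rop κ h y := (hf.Rop hκ).mul (hh.Rop hκ)
  have hP : BoundedContDiff 1 fun y => deriv (Rop κ f) y * deriv (Rop κ h) y :=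
    (hf.Rop hκ).deriv.mul (hh.Rop hκ).deriv
  have hRQ : BoundedContDiff 2 (Rop κ fun y => Rop κ f y * Rop κ h y) :=
    (hQ.Rop hκ).of_le (by norm_num)
  have hRP : BoundedContDiff 2 (Rop κ fun y => deriv (Rop κ f) y * deriv (Rop κ h) y) :=
    (hP.Rop hκ).of_le (by norm_num)
  have hmRQ : BoundedContDiff 2 fun x =>
      8 * (κ : ℂ) ^ 2 * Rop κ (fun y => Rop κ f y * Rop κ h y) x :=
    hRQ.const_smul (8 * (κ : ℂ) ^ 2)
  refine (hf.perimeterIntegral hκ hh).eq_of_iteratedDeriv_two (by positivity)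
    (((hQ.add hRP).add hmRQ).const_smul (8 * (κ : ℂ) ^ 2))
    (iteratedDeriv_two_perimeterIntegral hκ hf hh) fun x => ?_
  rw [iteratedDeriv_const_mul_field,
    iteratedDeriv_fun_add (hQ.add hRP).contDiff.contDiffAt hmRQ.contDiff.contDiffAt,
    iteratedDeriv_fun_add hQ.contDiff.contDiffAt hRP.contDiff.contDiffAt,
    iteratedDeriv_const_mul_field, hQ.iteratedDeriv_two_Rop hκ, hP.iteratedDeriv_two_Rop hκ,
    iteratedDeriv_two_Rop_mul_Rop hκ hf hh]
  simp only [Complex.real_smul]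
  push_cast
  ring

end PerimeterODE

theorem stmt15_general {κ : ℝ} (hκ : 0 < κ) {f h : ℝ → ℂ} (hf : BoundedContDiff 2 f)
    (hh : BoundedContDiff 2 h) (x : ℝ) :
    (16 * (κ : ℂ) ^ 5) *
        ∫ p : ℝ × ℝ,
          ((((2 * κ)⁻¹ * Real.exp (-κ * |x - p.1|)) *
            ((2 * κ)⁻¹ * Real.exp (-κ * |p.1 - p.2|)) *
            ((2 * κ)⁻¹ * Real.exp (-κ * |p.2 - x|)) : ℝ) : ℂ) * f p.1 * h p.2 =
      3 * f x * h x -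
        3 * Rop κ (iteratedDeriv 2 f) x * Rop κ (iteratedDeriv 2 h) x -
        20 * (κ : ℂ) ^ 2 * Rop κ (deriv f) x * Rop κ (deriv h) x +
        4 * (κ : ℂ) ^ 2 *
          Rop κ (iteratedDeriv 2 (fun y => Rop κ (deriv f) y * Rop κ (deriv h) y)) x +
        20 * (κ : ℂ) ^ 2 * iteratedDeriv 2 (fun y => Rop κ f y * Rop κ h y) x +
        8 * (κ : ℂ) ^ 2 * Rop κ (iteratedDeriv 4 (fun y => Rop κ f y * Rop κ h y)) x := by
  have hF : BoundedContDiff 4 (Rop κ f) := hf.Rop hκ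
  have hH : BoundedContDiff 4 (Rop κ h) := hh.Rop hκ
  have hP : BoundedContDiff 2 fun y => deriv (Rop κ f) y * deriv (Rop κ h) y :=
    ((hF.deriv).mul hH.deriv).of_le (by norm_num)
  rw [integral_kernels_eq_perimeterIntegral, perimeterIntegral_eq_Rop hκ hf hh,
    Rop_deriv hκ (hf.of_le one_le_two), Rop_deriv hκ (hh.of_le one_le_two),
    Rop_iteratedDeriv_two hκ hf, Rop_iteratedDeriv_two hκ hh, Rop_iteratedDeriv_two hκ hP,
    Rop_iteratedDeriv_four hκ (hF.mul hH)]
  simp only [iteratedDeriv_two_Rop_mul_Rop hκ hf hh, Complex.real_smul]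
  push_cast
  field_simp
  ring

/-- The quadratic operator identity
`16κ⁵⟨δₓ, R₀ f R₀ h R₀ δₓ⟩ = 3fh − 3[Rf″][Rh″] + 4κ²(−5 + R∂²)([Rf′][Rh′])
+ 4κ²(5∂² + 2R∂⁴)([Rf][Rh])` with `R = R₀(2κ)`, written out with kernels. -/
theorem stmt15 (κ : ℝ) (hκ : 0 < κ) (f h : SchwartzMap ℝ ℂ) (x : ℝ) :
    (16 * (κ : ℂ) ^ 5) *
        ∫ p : ℝ × ℝ,
          ((((2 * κ)⁻¹ * Real.exp (-κ * |x - p.1|)) *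
            ((2 * κ)⁻¹ * Real.exp (-κ * |p.1 - p.2|)) *
            ((2 * κ)⁻¹ * Real.exp (-κ * |p.2 - x|)) : ℝ) : ℂ) * f p.1 * h p.2 =
      3 * f x * h x -
        3 * Rop κ (iteratedDeriv 2 ⇑f) x * Rop κ (iteratedDeriv 2 ⇑h) x -
        20 * (κ : ℂ) ^ 2 * Rop κ (deriv ⇑f) x * Rop κ (deriv ⇑h) x +
        4 * (κ : ℂ) ^ 2 *
          Rop κ (iteratedDeriv 2 (fun y => Rop κ (deriv ⇑f) y * Rop κ (deriv ⇑h) y)) x +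
        20 * (κ : ℂ) ^ 2 * iteratedDeriv 2 (fun y => Rop κ (⇑f) y * Rop κ (⇑h) y) x +
        8 * (κ : ℂ) ^ 2 * Rop κ (iteratedDeriv 4 (fun y => Rop κ (⇑f) y * Rop κ (⇑h) y)) x :=
  stmt15_general hκ (.of_schwartzMap f) (.of_schwartzMap h) x
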